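/- arXiv:1310.3015 — 4 statements merged into one kernel-verified Lean document; each statement's English description precedes it below -/
import Mathlib

section
/- Let N, p, q be positive integers, let H_0, …, H_{N−1} be p×q complex matrices, and let H_c be the Np×Nq block circulant matrix whose (i,j)-th p×q block (0-indexed, i, j = 0, …, N−1) equals H_{(j−i) mod N}, so that its first row block is [H_0, H_1, …, H_{N−1}]. Let W_N be the N×N normalized DFT matrix with entries W_N(k,l) = N^{−1/2} e^{ι2πkl/N} for k, l = 0, …, N−1, and let ⊗ denote the Kronecker product. Then the matrix (W_N^H ⊗ I_p) H_c (W_N ⊗ I_q) is block diagonal: its (k,l)-th p×q block is zero whenever k ≠ l, and its k-th diagonal block equals Σ_{n=0}^{N−1} H_n e^{ι2πkn/N}. -/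
open Matrix Complex Real Kronecker

/-- The orthogonality relation for the powers of a primitive root of unity. -/
theorem IsPrimitiveRoot.sum_inv_pow_mul_pow {K : Type*} [Field K] {N : ℕ} {ζ : K}
    (hζ : IsPrimitiveRoot ζ N) (k l : Fin N) :
    ∑ i : Fin N, (ζ⁻¹) ^ ((i : ℕ) * k) * ζ ^ ((i : ℕ) * l) = if k = l then (N : K) else 0 := by
  have hζ0 : ζ ≠ 0 := hζ.ne_zero (Fin.pos k).ne'
  have hterm : ∀ i : Fin N,
      (ζ⁻¹) ^ ((i : ℕ) * k) * ζ ^ ((i : ℕ) * l) = ((ζ ^ (k : ℕ))⁻¹ * ζ ^ (l : ℕ)) ^ (i : ℕ) := by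
    intro i
    rw [mul_pow, ← inv_pow, ← pow_mul, ← pow_mul, mul_comm (k : ℕ), mul_comm (l : ℕ)]
  simp_rw [hterm]
  split_ifs with hkl
  · simp [hkl, hζ0]
  · have hne : (ζ ^ (k : ℕ))⁻¹ * ζ ^ (l : ℕ) ≠ 1 := by
      intro h
      refine hkl (Fin.ext (hζ.pow_inj k.2 l.2 ?_))
      exact (inv_mul_eq_one₀ (pow_ne_zero _ hζ0)).1 h
    rw [Fin.sum_univ_eq_sum_range fun i => ((ζ ^ (k : ℕ))⁻¹ * ζ ^ (l : ℕ)) ^ i,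
      geom_sum_eq hne, mul_pow, inv_pow, ← pow_mul, ← pow_mul, mul_comm (k : ℕ),
      mul_comm (l : ℕ), pow_mul, pow_mul, hζ.pow_eq_one]
    simp

/-- Powers of an `N`-th root of unity are additive in exponents taken modulo `N`. -/
theorem pow_fin_val_add_mul {M : Type*} [CommMonoid M] {N : ℕ} {ζ : M} (hζ : ζ ^ N = 1)
    (i n : Fin N) (l : ℕ) :
    ζ ^ (((i + n : Fin N) : ℕ) * l) = ζ ^ ((i : ℕ) * l) * ζ ^ ((n : ℕ) * l) := by
  rw [pow_mul, pow_mul, pow_mul, ← mul_pow, ← pow_add, Fin.val_add, ← pow_eq_pow_mod _ hζ]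

/-- The entries of the DFT kernel as powers of the standard primitive root of unity. -/
theorem exp_dft_eq_pow (N k l : ℕ) :
    Complex.exp (Complex.I * (2 * π * k * l) / N) =
      Complex.exp (2 * π * Complex.I / N) ^ (k * l) := by
  rw [← Complex.exp_nat_mul]
  congr 1
  push_cast
  ring

/-- Entries of a two-sided product with Kronecker factors `A ⊗ I` and `B ⊗ I`. -/
theorem kronecker_one_mul_mul_kronecker_one_apply {R m n m' n' p q : Type*} [CommSemiring R]
    [Fintype m] [Fintype n] [Fintype p] [Fintype q] [DecidableEq p] [DecidableEq q]
    (A : Matrix m' m R) (X : Matrix (m × p) (n × q) R) (B : Matrix n n' R)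
    (k : m') (l : n') (a : p) (b : q) :
    ((A ⊗ₖ (1 : Matrix p p R)) * X * (B ⊗ₖ (1 : Matrix q q R))) (k, a) (l, b) =
      ∑ i, ∑ j, A k i * X (i, a) (j, b) * B j l := by
  simp only [Matrix.mul_apply, Fintype.sum_prod_type, kroneckerMap_apply, Matrix.one_apply]
  simp [Finset.sum_mul]
  exact Finset.sum_comm

/-- Block circulant matrices are block-diagonalized by the DFT matrix:
the `(k,l)`-th block of `(W_Nᴴ ⊗ I_p) H_c (W_N ⊗ I_q)` vanishes for `k ≠ l`,
and the `k`-th diagonal block equals `Σ_n H_n e^{ι2πkn/N}`. -/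
theorem block_circulant_diagonalization
    (N p q : ℕ) (hN : 0 < N) (hp : 0 < p) (hq : 0 < q)
    (H : Fin N → Matrix (Fin p) (Fin q) ℂ)
    (Hc : Matrix (Fin N × Fin p) (Fin N × Fin q) ℂ)
    (hHc : ∀ (i j : Fin N) (a : Fin p) (b : Fin q), Hc (i, a) (j, b) = H (j - i) a b)
    (W : Matrix (Fin N) (Fin N) ℂ)
    (hW : ∀ k l : Fin N,
      W k l = (1 / Real.sqrt N : ℂ) * Complex.exp (Complex.I * (2 * π * k * l) / N))
    (D : Matrix (Fin N × Fin p) (Fin N × Fin q) ℂ)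
    (hD : D = (Wᴴ ⊗ₖ (1 : Matrix (Fin p) (Fin p) ℂ)) * Hc
              * (W ⊗ₖ (1 : Matrix (Fin q) (Fin q) ℂ))) :
    (∀ (k l : Fin N) (a : Fin p) (b : Fin q), k ≠ l → D (k, a) (l, b) = 0) ∧
    (∀ (k : Fin N) (a : Fin p) (b : Fin q),
      D (k, a) (k, b) =
        ∑ n : Fin N, H n a b * Complex.exp (Complex.I * (2 * π * k * n) / N)) := by
  have : NeZero N := ⟨hN.ne'⟩
  set ζ : ℂ := Complex.exp (2 * π * Complex.I / N)
  have hζ : IsPrimitiveRoot ζ N := Complex.isPrimitiveRoot_exp N hN.ne'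
  have hconj : star ζ = ζ⁻¹ :=
    (Complex.inv_eq_conj (hζ.norm'_eq_one hN.ne')).symm
  have hsqrt : (1 / Real.sqrt N : ℂ) * (1 / Real.sqrt N : ℂ) * N = 1 := by
    have hN' : (N : ℂ) ≠ 0 := Nat.cast_ne_zero.2 hN.ne'
    have h : (Real.sqrt N : ℂ) * Real.sqrt N = N := by
      exact_mod_cast congrArg ((↑) : ℝ → ℂ) (Real.mul_self_sqrt (Nat.cast_nonneg N))
    rw [div_mul_div_comm, h, one_mul, one_div_mul_cancel hN']
  have hWζ : ∀ k l : Fin N, W k l = (1 / Real.sqrt N : ℂ) * ζ ^ ((k : ℕ) * l) := by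
    intro k l
    rw [hW, exp_dft_eq_pow]
  have hWstar : ∀ k l : Fin N, Wᴴ k l = (1 / Real.sqrt N : ℂ) * (ζ⁻¹) ^ ((l : ℕ) * k) := by
    intro k l
    rw [conjTranspose_apply, hWζ, star_mul', star_pow, hconj]
    simp
  have key : ∀ (k l : Fin N) (a : Fin p) (b : Fin q),
      D (k, a) (l, b) = if k = l then ∑ n : Fin N, H n a b * ζ ^ ((n : ℕ) * l) else 0 := by
    intro k l a b
    have hshift : ∀ i : Fin N, ∑ j, Wᴴ k i * Hc (i, a) (j, b) * W j l =
        (1 / Real.sqrt N : ℂ) * (1 / Real.sqrt N : ℂ) *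
          ((ζ⁻¹) ^ ((i : ℕ) * k) * ζ ^ ((i : ℕ) * l)) *
          ∑ n : Fin N, H n a b * ζ ^ ((n : ℕ) * l) := by
      intro i
      rw [← Equiv.sum_comp (Equiv.addLeft i), Finset.mul_sum]
      refine Finset.sum_congr rfl fun n _ => ?_
      rw [Equiv.coe_addLeft, hHc, add_sub_cancel_left, hWstar, hWζ,
        pow_fin_val_add_mul hζ.pow_eq_one]
      ring
    rw [hD, kronecker_one_mul_mul_kronecker_one_apply]
    simp_rw [hshift]
    rw [← Finset.sum_mul, ← Finset.mul_sum, hζ.sum_inv_pow_mul_pow]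
    split_ifs
    · rw [hsqrt, one_mul]
    · simp
  refine ⟨fun k l a b hkl => by rw [key, if_neg hkl], fun k a b => ?_⟩
  rw [key, if_pos rfl]
  refine Finset.sum_congr rfl fun n _ => ?_
  rw [exp_dft_eq_pow, mul_comm (n : ℕ)]
end

section
/- Let I be a nonempty finite index set, and for each i ∈ I let θ_i > 0, d_i ≥ 0 and c_i ∈ ℝ be given, and let P > 0. Consider minimizing f(p) = Σ_{i∈I} θ_i (d_i² p_i² − 2 d_i p_i + c_i) over all p : I → ℝ satisfying p_i ≥ 0 for all i and Σ_{i∈I} p_i² = P. Suppose μ ∈ ℝ satisfies θ_i d_i² + μ > 0 for all i ∈ I and Σ_{i∈I} (max(θ_i d_i/(θ_i d_i² + μ), 0))² = P. Then the point p* defined by p*_i = max(θ_i d_i/(θ_i d_i² + μ), 0) is a global minimizer: p* is feasible (p*_i ≥ 0 for all i and Σ_i (p*_i)² = P), and f(p*) ≤ f(p) for every p : I → ℝ with p_i ≥ 0 for all i and Σ_i p_i² = P. -/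
open Finset

/-- Proposition 1 (water-filling power allocation): the point
`p*_i = max(θ_i d_i/(θ_i d_i² + μ), 0)` determined by the multiplier `μ` is a
global minimizer of the weighted sum MSE subject to the total power constraint. -/
theorem waterfilling_global_minimizer
    {I : Type*} [Fintype I] [Nonempty I]
    (θ d c : I → ℝ) (P : ℝ)
    (hθ : ∀ i, 0 < θ i) (hd : ∀ i, 0 ≤ d i) (hP : 0 < P)
    (μ : ℝ)
    (hden : ∀ i, 0 < θ i * (d i) ^ 2 + μ)
    (hpow : ∑ i, (max (θ i * d i / (θ i * (d i) ^ 2 + μ)) 0) ^ 2 = P)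
    (pstar : I → ℝ)
    (hpstar : ∀ i, pstar i = max (θ i * d i / (θ i * (d i) ^ 2 + μ)) 0) :
    (∀ i, 0 ≤ pstar i) ∧ (∑ i, (pstar i) ^ 2 = P) ∧
    ∀ p : I → ℝ, (∀ i, 0 ≤ p i) → (∑ i, (p i) ^ 2 = P) →
      ∑ i, θ i * ((d i) ^ 2 * (pstar i) ^ 2 - 2 * d i * pstar i + c i) ≤
      ∑ i, θ i * ((d i) ^ 2 * (p i) ^ 2 - 2 * d i * p i + c i) := by
  have hnonneg : ∀ i, 0 ≤ pstar i := fun i => hpstar i ▸ le_max_right _ _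
  have hpower : ∑ i, (pstar i) ^ 2 = P := by simpa only [hpstar] using hpow
  refine ⟨hnonneg, hpower, fun p _ hp => ?_⟩
  have hstationary : ∀ i, (θ i * (d i) ^ 2 + μ) * pstar i = θ i * d i := fun i => by
    rw [hpstar, max_eq_left (div_nonneg (mul_nonneg (hθ i).le (hd i)) (hden i).le),
      mul_div_cancel₀ _ (hden i).ne']
  have hgap : ∑ i, θ i * ((d i) ^ 2 * (p i) ^ 2 - 2 * d i * p i + c i) -
      ∑ i, θ i * ((d i) ^ 2 * (pstar i) ^ 2 - 2 * d i * pstar i + c i) +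
      μ * (∑ i, (p i) ^ 2 - ∑ i, (pstar i) ^ 2) =
      ∑ i, (θ i * (d i) ^ 2 + μ) * (p i - pstar i) ^ 2 := by
    rw [← sum_sub_distrib, ← sum_sub_distrib, mul_sum, ← sum_add_distrib]
    refine sum_congr rfl fun i _ => ?_
    linear_combination 2 * (p i - pstar i) * hstationary i
  have hsq : 0 ≤ ∑ i, (θ i * (d i) ^ 2 + μ) * (p i - pstar i) ^ 2 :=
    sum_nonneg fun i _ => mul_nonneg (hden i).le (sq_nonneg _)
  rw [hp, hpower, sub_self, mul_zero, add_zero] at hgap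
  linarith
end

section
/- Let I be a nonempty finite index set, and for each i ∈ I let θ_i > 0, d_i ≥ 0 and c_i ∈ ℝ be given, and let P > 0. Define f(p) = Σ_{i∈I} θ_i (d_i² p_i² − 2 d_i p_i + c_i). Suppose p : I → ℝ, μ ∈ ℝ, and λ : I → ℝ satisfy the KKT conditions: p_i ≥ 0 and λ_i ≥ 0 for all i, Σ_{i∈I} p_i² = P, θ_i d_i² + μ > 0 for all i, complementary slackness λ_i p_i = 0 for all i, and stationarity 2 θ_i d_i² p_i − 2 θ_i d_i + 2 μ p_i − λ_i = 0 for all i. Then p is a global minimizer: f(p) ≤ f(q) for every q : I → ℝ with q_i ≥ 0 for all i and Σ_{i∈I} q_i² = P. -/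
open Finset

/-- KKT sufficiency for the power-allocation problem: any point satisfying the
KKT conditions (primal feasibility, dual feasibility, complementary slackness,
stationarity) with `θ_i d_i² + μ > 0` is a global minimizer of the weighted sum
MSE subject to the total power constraint. -/
theorem kkt_sufficiency_power_allocation
    {I : Type*} [Fintype I] [Nonempty I]
    (θ d c : I → ℝ) (P : ℝ)
    (hθ : ∀ i, 0 < θ i) (hd : ∀ i, 0 ≤ d i) (hP : 0 < P)
    (p : I → ℝ) (μ : ℝ) (lam : I → ℝ)
    (hp : ∀ i, 0 ≤ p i) (hlam : ∀ i, 0 ≤ lam i)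
    (hfeas : ∑ i, (p i) ^ 2 = P)
    (hden : ∀ i, 0 < θ i * (d i) ^ 2 + μ)
    (hcs : ∀ i, lam i * p i = 0)
    (hstat : ∀ i, 2 * θ i * (d i) ^ 2 * p i - 2 * θ i * d i + 2 * μ * p i - lam i = 0) :
    ∀ q : I → ℝ, (∀ i, 0 ≤ q i) → (∑ i, (q i) ^ 2 = P) →
      ∑ i, θ i * ((d i) ^ 2 * (p i) ^ 2 - 2 * d i * p i + c i) ≤
      ∑ i, θ i * ((d i) ^ 2 * (q i) ^ 2 - 2 * d i * q i + c i) := by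
  intro q hq hqP
  have hLagrangian : ∑ i, (θ i * ((d i) ^ 2 * (p i) ^ 2 - 2 * d i * p i + c i) + μ * (p i) ^ 2) ≤
      ∑ i, (θ i * ((d i) ^ 2 * (q i) ^ 2 - 2 * d i * q i + c i) + μ * (q i) ^ 2) := by
    refine Finset.sum_le_sum fun i _ => ?_
    have hquad := mul_nonneg (hden i).le (sq_nonneg (q i - p i))
    have hslack := mul_nonneg (hlam i) (hq i)
    linear_combination hquad + hslack - (q i - p i) * hstat i + hcs i
  rw [Finset.sum_add_distrib, Finset.sum_add_distrib, ← Finset.mul_sum, ← Finset.mul_sum,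
    hfeas, hqP] at hLagrangian
  exact le_of_add_le_add_right hLagrangian
end

section
/- Let N, N_cp, L, p, q be positive integers with L ≤ N and L − 1 ≤ N_cp. Let C_0, …, C_{L−1} be p×q complex matrices, and set C_k = 0 (the p×q zero matrix) for every integer k with k < 0 or k ≥ L. Let H be the block matrix with N row blocks and N + N_cp column blocks whose (i,j)-th p×q block equals C_{j−i} (0-indexed), i.e., a banded block Toeplitz matrix. Let T_cp be the cyclic-prefix insertion matrix: the block matrix with N + N_cp row blocks and N column blocks of size q×q whose (i,j)-th block equals I_q if (i < N and i = j) or (i ≥ N and j = i − N), and 0 otherwise. Then the product H · T_cp is the Np×Nq block circulant matrix whose (i,j)-th p×q block equals C_{(j−i) mod N}. -/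
open Matrix

/-- Cyclic-prefix insertion turns the banded block Toeplitz channel matrix into
a block circulant matrix, provided the channel memory `L − 1` does not exceed
the cyclic prefix length `N_cp`. -/
theorem cyclic_prefix_makes_block_circulant
    (N Ncp L p q : ℕ) (hN : 0 < N) (hNcp : 0 < Ncp) (hL : 0 < L)
    (hp : 0 < p) (hq : 0 < q)
    (hLN : L ≤ N) (hLcp : L - 1 ≤ Ncp)
    (C : ℤ → Matrix (Fin p) (Fin q) ℂ)
    (hCsupp : ∀ k : ℤ, (k < 0 ∨ (L : ℤ) ≤ k) → C k = 0)
    (H : Matrix (Fin N × Fin p) (Fin (N + Ncp) × Fin q) ℂ)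
    (hH : ∀ (i : Fin N) (j : Fin (N + Ncp)) (a : Fin p) (b : Fin q),
      H (i, a) (j, b) = C ((j : ℤ) - (i : ℤ)) a b)
    (Tcp : Matrix (Fin (N + Ncp) × Fin q) (Fin N × Fin q) ℂ)
    (hTcp : ∀ (i : Fin (N + Ncp)) (j : Fin N) (a b : Fin q),
      Tcp (i, a) (j, b) =
        if ((i : ℕ) < N ∧ (i : ℕ) = (j : ℕ)) ∨ (N ≤ (i : ℕ) ∧ (j : ℕ) = (i : ℕ) - N)
        then (1 : Matrix (Fin q) (Fin q) ℂ) a b else 0) :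
    ∀ (i j : Fin N) (a : Fin p) (b : Fin q),
      (H * Tcp) (i, a) (j, b) = C (((j : ℤ) - (i : ℤ)) % (N : ℤ)) a b := by
  intro i j a b
  have hi := i.isLt
  have hj := j.isLt
  have inner_sum (k : Fin (N + Ncp)) :
      ∑ c : Fin q, H (i, a) (k, c) * Tcp (k, c) (j, b) =
        if ((k : ℕ) < N ∧ (k : ℕ) = j) ∨ (N ≤ (k : ℕ) ∧ (j : ℕ) = k - N)
        then C ((k : ℤ) - i) a b else 0 := by
    simp only [hH, hTcp]
    split_ifs <;> simp [Matrix.one_apply]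
  have body_sum :
      (∑ k : Fin N, if (k : ℕ) = j then C ((k : ℤ) - i) a b else 0) =
        C ((j : ℤ) - i) a b := by
    simp [← Fin.ext_iff]
  have prefix_sum :
      (∑ k : Fin Ncp, if (j : ℕ) = k then C (((N + k : ℕ) : ℤ) - i) a b else 0) =
        if (j : ℕ) < Ncp then C ((N : ℤ) + j - i) a b else 0 := by
    split_ifs with h
    · rw [Finset.sum_eq_single ⟨j, h⟩] <;> simp +contextual [Fin.ext_iff, eq_comm]
    · exact Finset.sum_eq_zero fun k _ => if_neg (by omega)
  have product_entry : (H * Tcp) (i, a) (j, b) =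
      C ((j : ℤ) - i) a b + if (j : ℕ) < Ncp then C ((N : ℤ) + j - i) a b else 0 := by
    rw [Matrix.mul_apply, Fintype.sum_prod_type, Finset.sum_congr rfl fun k _ => inner_sum k,
      Fin.sum_univ_add, ← body_sum, ← prefix_sum]
    congr 1 <;> refine Finset.sum_congr rfl fun k _ => ?_
    · simp [k.isLt, k.isLt.not_ge]
    · simp
  rw [product_entry]
  rcases le_or_gt (i : ℕ) j with hij | hij
  · rw [Int.emod_eq_of_lt (by omega) (by omega), hCsupp ((N : ℤ) + j - i) (by omega)]
    simp
  · have hmod : ((j : ℤ) - i) % N = (N : ℤ) + j - i := by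
      rw [← Int.add_emod_right, Int.emod_eq_of_lt (by omega) (by omega)]
      ring
    rw [hmod, hCsupp ((j : ℤ) - i) (by omega)]
    split_ifs with h
    · simp
    · simp [hCsupp ((N : ℤ) + j - i) (by omega)]
end
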